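/- arXiv:2402.05555 — 2 statements merged into one kernel-verified Lean document; each statement's English description precedes it below -/
import Mathlib

section
/- Let K be a field, n ≥ 1, S = K[x_1,…,x_n], 𝔪 = (x_1,…,x_n), and let I = (x_1^{a_1},…,x_n^{a_n}) with 1 ≤ a_1 ≤ a_2 ≤ … ≤ a_n. Suppose Σ_{i=1}^{n−1} a_i ≥ n, and set k = Σ_{i=1}^{n−1} a_i − n. Then the monomial v = ∏_{i=1}^{n} x_i^{a_i − 1} satisfies v·𝔪 ⊆ I𝔪^{k+1} and v ∉ I𝔪^{k}; in particular (I𝔪^{k+1} : 𝔪) ≠ I𝔪^{k}, so I𝔪^k is not weakly 𝔪-full. -/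
/-!
For every variable `X j`, the product `v * X j` is the generator `X j ^ a j` of `I` times
`∏ i ≠ j, X i ^ (a i - 1)`, a monomial of degree `∑ i ≠ j, (a i - 1)`. So `v 𝔪 ⊆ I 𝔪 ^ (k + 1)` as
soon as all these degrees exceed `k`; the smallest of them omits the largest exponent. On the other
hand no generator of `I` divides `v`, so `v ∉ I ⊇ I 𝔪 ^ k`.
-/

section FinsetSum

open Finset

variable {ι M : Type*}

theorem sum_sub_one_add_card {s : Finset ι} {a : ι → ℕ} (ha : ∀ i ∈ s, 1 ≤ a i) :
    ∑ i ∈ s, (a i - 1) + #s = ∑ i ∈ s, a i := by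
  rw [card_eq_sum_ones, ← sum_add_distrib]
  exact sum_congr rfl fun i hi ↦ Nat.sub_add_cancel (ha i hi)

theorem lt_sum_erase_sub_one [Fintype ι] [DecidableEq ι] {a : ι → ℕ} (ha : ∀ i, 1 ≤ a i)
    {k : ℕ} {j : ι} (hk : k + Fintype.card ι ≤ ∑ i ∈ univ.erase j, a i) :
    k < ∑ i ∈ univ.erase j, (a i - 1) := by
  have hsum := sum_sub_one_add_card (s := univ.erase j) fun i _ ↦ ha i
  have hcard : #(univ.erase j) + 1 = Fintype.card ι := card_erase_add_one (mem_univ j)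
  lia

variable [AddCommMonoid M] [PartialOrder M] [IsOrderedCancelAddMonoid M]

theorem sum_erase_le_sum_erase [DecidableEq ι] {s : Finset ι} {a : ι → M} {j t : ι}
    (hj : j ∈ s) (ht : t ∈ s) (h : a j ≤ a t) : ∑ i ∈ s.erase t, a i ≤ ∑ i ∈ s.erase j, a i := by
  refine le_of_add_le_add_left (a := a t) ?_
  calc a t + ∑ i ∈ s.erase t, a i = a j + ∑ i ∈ s.erase j, a i := by
        rw [add_sum_erase s a ht, add_sum_erase s a hj]
    _ ≤ a t + ∑ i ∈ s.erase j, a i := by gcongr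

theorem sum_filter_lt_pred_le_sum_erase {n : ℕ} {a : Fin n → M} (ha : Monotone a)
    (j : Fin n) : ∑ i : Fin n with i.val < n - 1, a i ≤ ∑ i ∈ univ.erase j, a i := by
  obtain _ | n := n
  · exact j.elim0
  have hlast : ({i | i.val < n + 1 - 1} : Finset (Fin (n + 1))) = univ.erase (Fin.last n) := by
    ext i
    simp [← Fin.lt_last_iff_ne_last, Fin.lt_def]
  rw [hlast]
  exact sum_erase_le_sum_erase (mem_univ j) (mem_univ _) (ha j.le_last)

end FinsetSum

theorem prod_pow_mem_pow_sum {ι A : Type*} [CommSemiring A] {J : Ideal A} {s : Finset ι}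
    {x : ι → A} (hx : ∀ i ∈ s, x i ∈ J) (e : ι → ℕ) :
    ∏ i ∈ s, x i ^ e i ∈ J ^ ∑ i ∈ s, e i := by
  rw [← Finset.prod_pow_eq_pow_sum]
  exact Ideal.prod_mem_prod fun i hi ↦ Ideal.pow_mem_pow (hx i hi) _

section MonomialIdeal

open Finset MvPolynomial

variable {σ : Type*} (R : Type*) [CommSemiring R]

/-- The ideal `(X i ^ a i : i)` generated by pure powers of the variables. -/
noncomputable def purePowerIdeal (a : σ → ℕ) : Ideal (MvPolynomial σ R) :=
  Ideal.span (Set.range fun i ↦ X i ^ a i)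

/-- The monomial `∏ i, X i ^ (a i - 1)`, which spans the socle of the quotient by
`purePowerIdeal R a` when `R` is a field and all `a i` are positive. The subtraction is truncated,
so a factor with `a i = 0` is `1`. -/
noncomputable def socleMonomial [Fintype σ] (a : σ → ℕ) : MvPolynomial σ R :=
  ∏ i, X i ^ (a i - 1)

variable {R} {a : σ → ℕ}

theorem monomial_mem_purePowerIdeal_iff [Nontrivial R] {d : σ →₀ ℕ} :
    monomial d 1 ∈ purePowerIdeal R a ↔ ∃ i, a i ≤ d i := by
  classical
  have hspan : purePowerIdeal R a = Ideal.span ((fun d ↦ monomial d (1 : R)) ''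
      Set.range fun i ↦ Finsupp.single i (a i)) := by
    simp only [purePowerIdeal, ← Set.range_comp, Function.comp_def, X_pow_eq_monomial]
  rw [hspan, mem_ideal_span_monomial_image]
  simp [support_monomial]

variable [Fintype σ]

theorem socleMonomial_eq_monomial :
    socleMonomial R a = monomial (Finsupp.equivFunOnFinite.symm fun i ↦ a i - 1) 1 := by
  simp [socleMonomial, monomial_eq, Finsupp.prod_fintype]

theorem socleMonomial_notMem_purePowerIdeal [Nontrivial R] (ha : ∀ i, 1 ≤ a i) :
    socleMonomial R a ∉ purePowerIdeal R a := by
  rw [socleMonomial_eq_monomial, monomial_mem_purePowerIdeal_iff]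
  rintro ⟨i, hi⟩
  exact (Nat.sub_one_lt_of_lt (ha i)).not_ge hi

variable [DecidableEq σ]

theorem socleMonomial_mul_X {j : σ} (hj : 1 ≤ a j) :
    socleMonomial R a * X j = X j ^ a j * ∏ i ∈ univ.erase j, X i ^ (a i - 1) := by
  rw [socleMonomial, ← mul_prod_erase univ _ (mem_univ j), mul_right_comm, ← pow_succ,
    Nat.sub_add_cancel hj]

theorem socleMonomial_mem_colon_idealOfVars (ha : ∀ i, 1 ≤ a i) {l : ℕ}
    (hl : ∀ j, l ≤ ∑ i ∈ univ.erase j, (a i - 1)) :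
    socleMonomial R a ∈ (purePowerIdeal R a * idealOfVars σ R ^ l).colon (idealOfVars σ R) := by
  rw [idealOfVars, Ideal.colon_span, Submodule.mem_colon]
  rintro _ ⟨j, rfl⟩
  rw [smul_eq_mul, socleMonomial_mul_X (ha j)]
  exact Ideal.mul_mem_mul (Ideal.subset_span ⟨j, rfl⟩) <| Ideal.pow_le_pow_right (hl j) <|
    prod_pow_mem_pow_sum (fun i _ ↦ Ideal.subset_span (Set.mem_range_self i)) _

theorem stmt_6_general [Nontrivial R] (ha : ∀ i, 1 ≤ a i) {k : ℕ}
    (hk : ∀ j, k < ∑ i ∈ univ.erase j, (a i - 1)) :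
    (∀ f ∈ idealOfVars σ R,
        socleMonomial R a * f ∈ purePowerIdeal R a * idealOfVars σ R ^ (k + 1)) ∧
      socleMonomial R a ∉ purePowerIdeal R a * idealOfVars σ R ^ k ∧
      (purePowerIdeal R a * idealOfVars σ R ^ (k + 1)).colon (idealOfVars σ R) ≠
        purePowerIdeal R a * idealOfVars σ R ^ k := by
  have hcolon := socleMonomial_mem_colon_idealOfVars (R := R) ha hk
  have hnotMem : socleMonomial R a ∉ purePowerIdeal R a * idealOfVars σ R ^ k :=
    fun h ↦ socleMonomial_notMem_purePowerIdeal ha (Ideal.mul_le_left h)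
  exact ⟨Submodule.mem_colon.1 hcolon, hnotMem, fun h ↦ hnotMem (h ▸ hcolon)⟩

end MonomialIdeal

/-- For `I = (x_1^{a_1},…,x_n^{a_n})` with `1 ≤ a_1 ≤ … ≤ a_n` and
`Σ_{i=1}^{n-1} a_i ≥ n`, setting `k = Σ_{i=1}^{n-1} a_i − n`, the monomial
`v = Π_i x_i^{a_i−1}` satisfies `v𝔪 ⊆ I𝔪^{k+1}` but `v ∉ I𝔪^k`; in particular
`(I𝔪^{k+1} : 𝔪) ≠ I𝔪^k`, so `I𝔪^k` is not weakly `𝔪`-full. -/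
theorem stmt_6 (K : Type*) [Field K] (n : ℕ) (hn : 1 ≤ n)
    (a : Fin n → ℕ) (ha1 : ∀ i, 1 ≤ a i) (hmono : Monotone a)
    (m I : Ideal (MvPolynomial (Fin n) K))
    (hm : m = Ideal.span (Set.range (MvPolynomial.X : Fin n → MvPolynomial (Fin n) K)))
    (hI : I = Ideal.span (Set.range fun i : Fin n => (MvPolynomial.X i : MvPolynomial (Fin n) K) ^ a i))
    (S : ℕ) (hS : S = ∑ i ∈ Finset.univ.filter (fun i : Fin n => (i : ℕ) < n - 1), a i)
    (hSn : n ≤ S) (k : ℕ) (hk : k = S - n)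
    (v : MvPolynomial (Fin n) K)
    (hv : v = ∏ i : Fin n, (MvPolynomial.X i : MvPolynomial (Fin n) K) ^ (a i - 1)) :
    (∀ f ∈ m, v * f ∈ I * m ^ (k + 1)) ∧ v ∉ I * m ^ k ∧
      (I * m ^ (k + 1)).colon m ≠ I * m ^ k := by
  subst hm hI hS hk hv
  exact stmt_6_general ha1 fun j ↦ lt_sum_erase_sub_one ha1 <| by
    simpa [Nat.sub_add_cancel hSn] using sum_filter_lt_pred_le_sum_erase hmono j
end

section
/- Let K be a field, S = K[x_1,…,x_n], 𝔪 = (x_1,…,x_n), let A ⊆ ℕⁿ be a finite nonempty antichain under componentwise order such that for every i ∈ {1,…,n} there exists a ∈ A with a_i > 0, and let I = (x^a : a ∈ A). Let k ≥ 0 and let v be a monomial with v ∈ (I𝔪^{k+1} : 𝔪) but v ∉ I𝔪^{k}. Then for every p ∈ {1,…,n} the exponent of x_p in v is at most (max_{a ∈ A} a_p) − 1; in particular deg(v) ≤ Σ_{i=1}^{n} max_{a ∈ A} a_i − n. -/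
/-! A monomial `x ^ c` lies in `I𝔪 ^ k` iff some generator `x ^ a` divides it with
`deg a + k ≤ deg c`. Apply this to `x_p v ∈ I𝔪 ^ (k + 1)`: the generator obtained has degree at most
`deg v - k`, so it cannot divide `v ∉ I𝔪 ^ k`. As it divides `x_p v`, it must exceed `v` in the
exponent of `x_p`. -/

section

open MvPolynomial
open scoped Pointwise

variable {σ R : Type*} [CommSemiring R]

theorem span_monomial_image_mul_span_monomial_image (A B : Set (σ →₀ ℕ)) :
    Ideal.span ((fun a => monomial a (1 : R)) '' A) *
        Ideal.span ((fun a => monomial a (1 : R)) '' B) =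
      Ideal.span ((fun a => monomial a (1 : R)) '' (A + B)) := by
  rw [Ideal.span_mul_span', ← Set.image2_mul, ← Set.image2_add, Set.image_image2,
    Set.image2_image_left, Set.image2_image_right]
  simp only [monomial_mul, one_mul]

theorem mem_span_monomial_image_mul_pow_idealOfVars_iff {A : Set (σ →₀ ℕ)} {k : ℕ}
    {f : MvPolynomial σ R} :
    f ∈ Ideal.span ((fun a => monomial a (1 : R)) '' A) * idealOfVars σ R ^ k ↔
      ∀ c ∈ f.support, ∃ a ∈ A, a ≤ c ∧ a.degree + k ≤ c.degree := by
  rw [pow_idealOfVars_eq_span, span_monomial_image_mul_span_monomial_image,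
    mem_ideal_span_monomial_image]
  refine forall₂_congr fun c _ => ⟨?_, ?_⟩
  · rintro ⟨_, ⟨a, ha, d, rfl, rfl⟩, hadc⟩
    exact ⟨a, ha, le_self_add.trans hadc, by simpa only [map_add] using Finsupp.degree_mono hadc⟩
  · rintro ⟨a, ha, hac, hdeg⟩
    obtain ⟨e, rfl⟩ := exists_add_of_le hac
    rw [map_add, add_le_add_iff_left] at hdeg
    obtain ⟨d, hde, hdk⟩ := Finsupp.exists_le_degree_eq e k hdeg
    exact ⟨a + d, Set.add_mem_add ha hdk, by gcongr⟩

theorem monomial_mem_span_monomial_image_mul_pow_idealOfVars_iff {A : Set (σ →₀ ℕ)} {k : ℕ}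
    {c : σ →₀ ℕ} {r : R} (hr : r ≠ 0) :
    monomial c r ∈ Ideal.span ((fun a => monomial a (1 : R)) '' A) * idealOfVars σ R ^ k ↔
      ∃ a ∈ A, a ≤ c ∧ a.degree + k ≤ c.degree := by
  classical
  simp only [mem_span_monomial_image_mul_pow_idealOfVars_iff, support_monomial, if_neg hr,
    Finset.mem_singleton, forall_eq]

theorem apply_lt_of_le_add_single_of_not_le {M : Type*} [AddZeroClass M] [LinearOrder M]
    {a b : σ →₀ M} {p : σ} {x : M} (hle : a ≤ b + Finsupp.single p x) (hnot : ¬a ≤ b) :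
    b p < a p := by
  contrapose! hnot
  intro i
  obtain rfl | hi := eq_or_ne i p
  · exact hnot
  · simpa [hi] using hle i

theorem stmt_8_general {A : Set (σ →₀ ℕ)} {k : ℕ} {b : σ →₀ ℕ} {r : R}
    (hvin : monomial b r ∈
      (Ideal.span ((fun a => monomial a (1 : R)) '' A) * idealOfVars σ R ^ (k + 1)).colon
        (idealOfVars σ R))
    (hvnot : monomial b r ∉
      Ideal.span ((fun a => monomial a (1 : R)) '' A) * idealOfVars σ R ^ k)
    (p : σ) : ∃ a ∈ A, b p < a p := by
  have hr : r ≠ 0 := by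
    rintro rfl
    exact hvnot (by rw [monomial_zero]; exact zero_mem _)
  have hXv := Submodule.mem_colon.1 hvin (X p) (Ideal.subset_span ⟨p, rfl⟩)
  rw [smul_eq_mul, X, monomial_mul, mul_one,
    monomial_mem_span_monomial_image_mul_pow_idealOfVars_iff hr] at hXv
  rw [monomial_mem_span_monomial_image_mul_pow_idealOfVars_iff hr] at hvnot
  obtain ⟨a, ha, hle, hdeg⟩ := hXv
  rw [map_add, Finsupp.degree_single, ← add_assoc, add_le_add_iff_right] at hdeg
  exact ⟨a, ha, apply_lt_of_le_add_single_of_not_le hle fun hab => hvnot ⟨a, ha, hab, hdeg⟩⟩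

end

theorem sum_add_card_le_sum_of_lt {ι M : Type*} [AddCommMonoidWithOne M] [PartialOrder M]
    [IsOrderedAddMonoid M] [SuccAddOrder M] {s : Finset ι} {f g : ι → M}
    (h : ∀ i ∈ s, f i < g i) : ∑ i ∈ s, f i + s.card ≤ ∑ i ∈ s, g i := by
  calc
    ∑ i ∈ s, f i + s.card = ∑ i ∈ s, (f i + 1) := by
      rw [Finset.sum_add_distrib, Finset.sum_const, nsmul_one]
    _ ≤ ∑ i ∈ s, g i := Finset.sum_le_sum fun i hi => Order.add_one_le_of_lt (h i hi)

/-- Let `I = (x^a : a ∈ A)` with `A` a nonempty antichain such that every variable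
divides some generator. If a monomial `v = x^b` lies in `(I𝔪^{k+1} : 𝔪)` but not in
`I𝔪^k`, then `b_p ≤ (max_{a ∈ A} a_p) − 1` for every `p`, and in particular
`deg v ≤ Σ_i max_{a ∈ A} a_i − n`. -/
theorem stmt_8 (K : Type*) [Field K] (n : ℕ) (A : Finset (Fin n →₀ ℕ))
    (hAne : A.Nonempty)
    (hA : ∀ a ∈ A, ∀ b ∈ A, a ≤ b → a = b)
    (hcover : ∀ i : Fin n, ∃ a ∈ A, 0 < a i)
    (m I : Ideal (MvPolynomial (Fin n) K))
    (hm : m = Ideal.span (Set.range (MvPolynomial.X : Fin n → MvPolynomial (Fin n) K)))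
    (hI : I = Ideal.span ((fun a : Fin n →₀ ℕ => MvPolynomial.monomial a (1 : K)) '' A))
    (k : ℕ) (b : Fin n →₀ ℕ)
    (hvin : MvPolynomial.monomial b (1 : K) ∈ (I * m ^ (k + 1)).colon m)
    (hvnot : MvPolynomial.monomial b (1 : K) ∉ I * m ^ k) :
    (∀ p : Fin n, b p ≤ A.sup (fun a => a p) - 1) ∧
      (∑ i : Fin n, b i) ≤ (∑ i : Fin n, A.sup (fun a => a i)) - n := by
  subst hm hI
  have hlt (p : Fin n) : b p < A.sup (fun a => a p) :=
    Finset.lt_sup_iff.2 (stmt_8_general hvin hvnot p)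
  exact ⟨fun p => Nat.le_sub_one_of_lt (hlt p), Nat.le_sub_of_add_le <| by
    simpa using sum_add_card_le_sum_of_lt fun i (_ : i ∈ Finset.univ) => hlt i⟩
end
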